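/- Let f : ℝ² → ℝ be of class C² satisfying (i) D²f(p)(q,q) > 0 for all p, q ∈ ℝ² with q ≠ 0, and (ii) there is a constant λ > 0 with D²f(p)(q,q) ≤ λ · (ln(2+|p|)/(1+|p|)) · |q|² for all p, q ∈ ℝ². Let u ∈ C²(ℝ²) solve div[Df(∇u)] = 0 on ℝ², and suppose there are constants 0 ≤ m < 1, K > 0 with |∂₁u(x)| ≤ K(|∂₂u(x)|^m + 1) for all x ∈ ℝ². Then for every exponent α > −1/2 with 2m(1+α) − 1 < 0 one has ∫_{ℝ²} D²f(∇u)(∇∂₁u, ∇∂₁u) · (1+|∂₁u|²)^α dx < ∞. -/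

import Mathlib

open Real MeasureTheory Metric
open scoped ENNReal

noncomputable section

/-- `ℝ²` with its Euclidean structure. -/
abbrev E2 : Type := EuclideanSpace ℝ (Fin 2)

/-- The `i`-th standard basis vector of `ℝ²`. -/
def ee (i : Fin 2) : E2 := EuclideanSpace.single i 1

/-- The Hessian bilinear form `D²f(p)(q,q)`. -/
def Hess (f : E2 → ℝ) (p q : E2) : ℝ := iteratedFDeriv ℝ 2 f p ![q, q]

/-- The partial derivative `∂ᵢu(x)`. -/
def pd (u : E2 → ℝ) (i : Fin 2) (x : E2) : ℝ := fderiv ℝ u x (ee i)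

/-- The equation `div [Df(∇u)] = 0`, i.e. `∑ i, ∂ᵢ[(∂f/∂pᵢ)(∇u(x))] = 0` on `ℝ²`. -/
def solves (f u : E2 → ℝ) : Prop :=
  ∀ x : E2, ∑ i : Fin 2, fderiv ℝ (fun y => fderiv ℝ f (gradient u y) (ee i)) x (ee i) = 0

/-- A divergence-free `C¹` field is orthogonal to gradients of compactly supported functions. -/
lemma integral_sum_mul_fderiv_eq_zero {F : Fin 2 → E2 → ℝ} (hF : ∀ i, ContDiff ℝ 1 (F i))
    (hdiv : ∀ x, ∑ i, fderiv ℝ (F i) x (ee i) = 0) {φ : E2 → ℝ} (hφ : ContDiff ℝ 1 φ)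
    (hc : HasCompactSupport φ) :
    ∫ x, ∑ i, F i x * fderiv ℝ φ x (ee i) = 0 := by
  have hFd (i : Fin 2) : Continuous fun x => fderiv ℝ (F i) x (ee i) :=
    ((hF i).continuous_fderiv one_ne_zero).clm_apply continuous_const
  have hφd (i : Fin 2) : Continuous fun x => fderiv ℝ φ x (ee i) :=
    (hφ.continuous_fderiv one_ne_zero).clm_apply continuous_const
  have h1 (i : Fin 2) : Integrable fun x => fderiv ℝ (F i) x (ee i) * φ x :=
    ((hFd i).mul hφ.continuous).integrable_of_hasCompactSupport hc.mul_left
  have h2 (i : Fin 2) : Integrable fun x => F i x * fderiv ℝ φ x (ee i) :=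
    ((hF i).continuous.mul (hφd i)).integrable_of_hasCompactSupport
      (hc.fderiv_apply ℝ (ee i)).mul_left
  rw [integral_finsetSum _ fun i _ => h2 i]
  have h3 (i : Fin 2) : ∫ x, F i x * fderiv ℝ φ x (ee i)
      = -∫ x, fderiv ℝ (F i) x (ee i) * φ x :=
    integral_mul_fderiv_eq_neg_fderiv_mul_of_integrable (h1 i) (h2 i)
      (((hF i).continuous.mul hφ.continuous).integrable_of_hasCompactSupport hc.mul_left)
      (fun x _ => (hF i).differentiable one_ne_zero x)
      (fun x _ => hφ.differentiable one_ne_zero x)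
  simp_rw [h3]
  rw [Finset.sum_neg_distrib, ← integral_finsetSum _ fun i _ => h1 i]
  simp [← Finset.sum_mul, hdiv]

/-- The directional derivatives of a divergence-free `C¹` field are weakly divergence-free. -/
lemma integral_sum_fderiv_mul_fderiv_eq_zero {F : Fin 2 → E2 → ℝ}
    (hF : ∀ i, ContDiff ℝ 1 (F i))
    (hdiv : ∀ x, ∑ i, fderiv ℝ (F i) x (ee i) = 0) {φ : E2 → ℝ} (hφ : ContDiff ℝ 1 φ)
    (hc : HasCompactSupport φ) (v : E2) :
    ∫ x, ∑ i, fderiv ℝ (F i) x v * fderiv ℝ φ x (ee i) = 0 := by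
  have hφd (i : Fin 2) : Continuous fun x => fderiv ℝ φ x (ee i) :=
    (hφ.continuous_fderiv one_ne_zero).clm_apply continuous_const
  have hshift (t : ℝ) : ∫ x, ∑ i, F i (x + t • v) * fderiv ℝ φ x (ee i) = 0 := by
    refine integral_sum_mul_fderiv_eq_zero (F := fun i x => F i (x + t • v))
      (fun i => (hF i).comp (contDiff_id.add contDiff_const)) (fun x => ?_) hφ hc
    simp only [fderiv_comp_add_right]
    exact hdiv _
  have hGc : Continuous fun q : ℝ × E2 =>
      ∑ i, fderiv ℝ (F i) (q.2 + q.1 • v) v * fderiv ℝ φ q.2 (ee i) := by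
    refine continuous_finsetSum _ fun i _ => ?_
    have := (hF i).continuous_fderiv one_ne_zero
    exact ((this.comp (by fun_prop : Continuous fun q : ℝ × E2 => q.2 + q.1 • v)).clm_apply
      continuous_const).mul ((hφd i).comp continuous_snd)
  obtain ⟨M, hM⟩ := ((isCompact_closedBall (0 : ℝ) 1).prod hc).exists_bound_of_continuousOn
    hGc.continuousOn
  have key := hasDerivAt_integral_of_dominated_loc_of_deriv_le (μ := (volume : Measure E2))
    (F := fun (t : ℝ) x => ∑ i, F i (x + t • v) * fderiv ℝ φ x (ee i))
    (F' := fun (t : ℝ) x => ∑ i, fderiv ℝ (F i) (x + t • v) v * fderiv ℝ φ x (ee i))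
    (x₀ := 0) (s := closedBall 0 1) (bound := (tsupport φ).indicator fun _ => M)
    (closedBall_mem_nhds _ one_pos)
    (Filter.Eventually.of_forall fun t => Continuous.aestronglyMeasurable <|
      continuous_finsetSum _ fun i _ =>
        ((hF i).continuous.comp (by fun_prop : Continuous fun x : E2 => x + t • v)).mul (hφd i))
    (integrable_finsetSum _ fun i _ =>
      (((hF i).continuous.comp (by fun_prop : Continuous fun x : E2 => x + (0 : ℝ) • v)).mul
        (hφd i)).integrable_of_hasCompactSupport (hc.fderiv_apply ℝ (ee i)).mul_left)
    (hGc.comp (by fun_prop : Continuous fun x : E2 => ((0 : ℝ), x))).aestronglyMeasurable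
    (Filter.Eventually.of_forall fun x t ht => ?_)
    ((integrable_indicator_iff hc.isCompact.isClosed.measurableSet).2
      (integrableOn_const hc.isCompact.measure_lt_top.ne))
    (Filter.Eventually.of_forall fun x t _ => ?_)
  · have h := key.2
    simp only [hshift] at h
    simpa using h.unique (hasDerivAt_const (0 : ℝ) (0 : ℝ))
  · by_cases hx : x ∈ tsupport φ
    · rw [Set.indicator_of_mem hx]
      exact hM (t, x) ⟨ht, hx⟩
    · rw [Set.indicator_of_notMem hx]
      have : fderiv ℝ φ x = 0 := by
        by_contra h0
        exact hx (support_fderiv_subset ℝ h0)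
      simp [this]
  · refine HasDerivAt.fun_sum fun i _ => HasDerivAt.mul_const ?_ _
    have h1 : HasDerivAt (fun t : ℝ => x + t • v) v t := by
      simpa using ((hasDerivAt_id t).smul_const v).const_add x
    exact ((hF i).differentiable one_ne_zero _).hasFDerivAt.comp_hasDerivAt t h1

/-- The weight controlling the growth of the Hessian is dominated by the anisotropy condition. -/
lemma exists_log_div_mul_rpow_le {m K α : ℝ} (hm0 : 0 ≤ m) (hK : 0 < K) (hα : -1 / 2 < α)
    (hmα : 2 * m * (1 + α) - 1 < 0) :
    ∃ C, 0 ≤ C ∧ ∀ P t g : ℝ, 0 ≤ t → t ≤ P → |g| ≤ K * (t ^ m + 1) →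
      Real.log (2 + P) / (1 + P) * (1 + g ^ 2) ^ (1 + α) ≤ C := by
  set s := 2 * m * (1 + α) with hs
  have hε : 0 < 1 - s := by linarith
  refine ⟨2 ^ (1 - s) / (1 - s) * (1 + 4 * K ^ 2) ^ (1 + α), by positivity,
    fun P t g ht htP hg => ?_⟩
  have hX : 1 ≤ 1 + P := by linarith
  set X := 1 + P with hXd
  have hX0 : 0 < X := by linarith
  have htm : t ^ m ≤ X ^ m := Real.rpow_le_rpow ht (by linarith) hm0
  have hXm : 1 ≤ X ^ m := Real.one_le_rpow hX hm0
  have hg2 : |g| ≤ 2 * K * X ^ m := hg.trans (by nlinarith)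
  have hΓ : 1 + g ^ 2 ≤ (1 + 4 * K ^ 2) * X ^ (2 * m) := by
    have h1 : X ^ (2 * m) = (X ^ m) ^ 2 := by
      rw [mul_comm, Real.rpow_mul hX0.le]; norm_num
    have h2 : g ^ 2 ≤ (2 * K * X ^ m) ^ 2 := sq_le_sq' (abs_le.1 hg2).1 (abs_le.1 hg2).2
    rw [h1]
    nlinarith
  have hΓα : (1 + g ^ 2) ^ (1 + α) ≤ (1 + 4 * K ^ 2) ^ (1 + α) * X ^ s := by
    refine (Real.rpow_le_rpow (by positivity) hΓ (by linarith)).trans_eq ?_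
    rw [Real.mul_rpow (by positivity) (by positivity), ← Real.rpow_mul hX0.le]
  have hlog : Real.log (2 + P) ≤ 2 ^ (1 - s) * X ^ (1 - s) / (1 - s) := by
    rw [← Real.mul_rpow (by norm_num) hX0.le]
    exact (Real.log_le_log (by linarith) (by linarith)).trans
      (Real.log_le_rpow_div (by positivity) hε)
  have hXX : X ^ (1 - s) * X ^ s = X := by
    rw [← Real.rpow_add hX0]; simp
  calc Real.log (2 + P) / X * (1 + g ^ 2) ^ (1 + α)
      ≤ 2 ^ (1 - s) * X ^ (1 - s) / (1 - s) / X * ((1 + 4 * K ^ 2) ^ (1 + α) * X ^ s) := by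
        gcongr
    _ = 2 ^ (1 - s) / (1 - s) * (1 + 4 * K ^ 2) ^ (1 + α) * (X ^ (1 - s) * X ^ s) / X := by ring
    _ = _ := by rw [hXX]; field_simp

lemma gradient_apply_eq_pd (u : E2 → ℝ) (x : E2) (i : Fin 2) : gradient u x i = pd u i x := by
  rw [pd, ← toDual_gradient, InnerProductSpace.toDual_apply_apply, ee,
    EuclideanSpace.inner_single_right]
  simp

lemma contDiff_gradient {n : WithTop ℕ∞} {u : E2 → ℝ} (hu : ContDiff ℝ (n + 1) u) :
    ContDiff ℝ n (gradient u) :=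
  (InnerProductSpace.toDual ℝ E2).symm.contDiff.comp (hu.fderiv_right le_rfl)

/-- Symmetry of second derivatives: `∂ᵢ∇u = ∇∂ᵢu`. -/
lemma fderiv_gradient_apply_ee {u : E2 → ℝ} (hu : ContDiff ℝ 2 u) (x : E2) (i : Fin 2) :
    fderiv ℝ (gradient u) x (ee i) = gradient (pd u i) x := by
  have hd : DifferentiableAt ℝ (fderiv ℝ u) x :=
    (hu.fderiv_right (m := 1) le_rfl).differentiable one_ne_zero x
  have h1 : fderiv ℝ (gradient u) x (ee i)
      = (InnerProductSpace.toDual ℝ E2).symm (fderiv ℝ (fderiv ℝ u) x (ee i)) := by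
    have := (InnerProductSpace.toDual ℝ E2).symm.toContinuousLinearEquiv.toContinuousLinearMap
      |>.hasFDerivAt.comp x hd.hasFDerivAt
    exact congrArg (fun L : E2 →L[ℝ] E2 => L (ee i)) this.fderiv
  have h2 : fderiv ℝ (pd u i) x = fderiv ℝ (fderiv ℝ u) x (ee i) := by
    ext w
    have : HasFDerivAt (pd u i) _ x := hd.hasFDerivAt.clm_apply (hasFDerivAt_const (ee i) x)
    rw [this.fderiv]
    simpa using (hu.contDiffAt.isSymmSndFDerivAt (by simp)).eq w (ee i)
  rw [h1, gradient, h2]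

lemma sum_clm_ee_mul_fderiv (L : E2 →L[ℝ] ℝ) (φ : E2 → ℝ) (x : E2) :
    ∑ i, L (ee i) * fderiv ℝ φ x (ee i) = L (gradient φ x) := by
  have h : gradient φ x = ∑ i, fderiv ℝ φ x (ee i) • ee i := by
    ext j
    rw [gradient_apply_eq_pd]
    fin_cases j <;> simp [ee, pd]
  rw [h, map_sum]
  simp [mul_comm]

/-- The differentiated equation in weak form. -/
lemma integral_snd_fderiv_gradient_eq_zero {f u : E2 → ℝ} (hf : ContDiff ℝ 2 f)
    (hu : ContDiff ℝ 2 u) (heq : solves f u) {φ : E2 → ℝ} (hφ : ContDiff ℝ 1 φ)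
    (hc : HasCompactSupport φ) (k : Fin 2) :
    ∫ x, fderiv ℝ (fderiv ℝ f) (gradient u x) (gradient (pd u k) x) (gradient φ x) = 0 := by
  have hg : ContDiff ℝ 1 (gradient u) := contDiff_gradient (n := 1) hu
  have hf' : ContDiff ℝ 1 (fderiv ℝ f) := hf.fderiv_right le_rfl
  have hF (i : Fin 2) : ContDiff ℝ 1 fun y => fderiv ℝ f (gradient u y) (ee i) :=
    (hf'.comp hg).clm_apply contDiff_const
  have key := integral_sum_fderiv_mul_fderiv_eq_zero hF heq hφ hc (ee k)
  rw [← key]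
  congr 1 with x
  rw [← sum_clm_ee_mul_fderiv]
  refine Finset.sum_congr rfl fun i _ => ?_
  have h1 : HasFDerivAt (fun y => fderiv ℝ f (gradient u y)) _ x :=
    (hf'.differentiable one_ne_zero _).hasFDerivAt.comp x
      (hg.differentiable one_ne_zero x).hasFDerivAt
  have h2 : HasFDerivAt (fun y => fderiv ℝ f (gradient u y) (ee i)) _ x :=
    h1.clm_apply (hasFDerivAt_const (ee i) x)
  rw [h2.fderiv]
  simp [fderiv_gradient_apply_ee hu]

lemma hasDerivAt_mul_one_add_sq_rpow (α t : ℝ) :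
    HasDerivAt (fun t : ℝ => t * (1 + t ^ 2) ^ α)
      ((1 + t ^ 2) ^ α * (1 + 2 * α * t ^ 2 / (1 + t ^ 2))) t := by
  have hΓ : 0 < 1 + t ^ 2 := by positivity
  have h1 : HasDerivAt (fun t : ℝ => 1 + t ^ 2) (2 * t) t := by
    simpa using (hasDerivAt_pow 2 t).const_add 1
  refine ((hasDerivAt_id t).mul (h1.rpow_const (p := α) (Or.inl hΓ.ne'))).congr_deriv ?_
  rw [Real.rpow_sub_one hΓ.ne']
  simp only [id]
  field_simp

/-- The gradient of the test function `η² h(g)`. -/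
lemma gradient_sq_mul_comp {η g : E2 → ℝ} {H : ℝ → ℝ} {H' : ℝ} {x : E2}
    (hη : DifferentiableAt ℝ η x)
    (hg : DifferentiableAt ℝ g x) (hH : HasDerivAt H H' (g x)) :
    gradient (fun y => η y ^ 2 * H (g y)) x =
      (η x ^ 2 * H') • gradient g x + (2 * η x * H (g x)) • gradient η x := by
  have h1 := (hη.hasFDerivAt.pow 2).mul (hH.comp_hasFDerivAt x hg.hasFDerivAt)
  have h2 : fderiv ℝ (fun y => η y ^ 2 * H (g y)) x =
      (η x ^ 2 * H') • fderiv ℝ g x + (2 * η x * H (g x)) • fderiv ℝ η x := by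
    refine h1.fderiv.trans ?_
    ext w
    simp
    ring
  simp only [gradient, h2, map_add, map_smulₛₗ]
  rfl

/-- Weighted Young inequality for a nonnegative symmetric bilinear form. -/
lemma mul_le_young_of_symm {V : Type*} [NormedAddCommGroup V] [NormedSpace ℝ V]
    (B : V →L[ℝ] V →L[ℝ] ℝ) (hsymm : ∀ v w, B v w = B w v) (hnn : ∀ v, 0 ≤ B v v)
    {c G w₁ : ℝ} (hc : 0 < c) (hG : 0 ≤ G) (hcw : c ≤ w₁) (η g : ℝ) (v w : V) :
    c / 2 * (η ^ 2 * (B v v * G)) ≤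
      B v ((η ^ 2 * (G * w₁)) • v + (2 * η * (g * G)) • w) + 2 / c * (g ^ 2 * G * B w w) := by
  have h1 := hnn ((c * η) • v + (2 * g) • w)
  simp only [map_add, map_smul, add_apply, smul_apply,
    smul_eq_mul, hsymm w v] at h1 ⊢
  have h2 : 0 ≤ (c * η * (c * η * B v v) + 2 * (2 * g * (c * η * B v w)) +
      2 * g * (2 * g * B w w)) * (G / (2 * c)) := by
    refine mul_nonneg ?_ (by positivity)
    linarith
  have h3 : (c * η * (c * η * B v v) + 2 * (2 * g * (c * η * B v w)) +
      2 * g * (2 * g * B w w)) * (G / (2 * c)) =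
      c / 2 * (η ^ 2 * (B v v * G)) + 2 * η * (g * G) * B v w + 2 / c * (g ^ 2 * G * B w w) := by
    field_simp
  have h4 : c * (η ^ 2 * G * B v v) ≤ w₁ * (η ^ 2 * G * B v v) :=
    mul_le_mul_of_nonneg_right hcw (mul_nonneg (by positivity) (hnn v))
  linarith

/-- Rescaled cutoff functions on the plane have uniformly bounded Dirichlet energy. -/
lemma exists_cutoff_dirichlet_bound : ∃ C : ℝ, ∀ R : ℝ, 0 < R → ∃ η : E2 → ℝ,
    ContDiff ℝ 1 η ∧ HasCompactSupport η ∧ (∀ x ∈ ball (0 : E2) R, η x = 1) ∧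
      Integrable (fun x => ‖gradient η x‖ ^ 2) ∧ ∫ x, ‖gradient η x‖ ^ 2 ≤ C := by
  let b : ContDiffBump (0 : E2) := ⟨1, 2, one_pos, one_lt_two⟩
  refine ⟨∫ x, ‖gradient b x‖ ^ 2, fun R hR => ?_⟩
  have hb : ContDiff ℝ 1 b := b.contDiff
  have hη : ContDiff ℝ 1 fun x : E2 => b (R⁻¹ • x) := hb.comp (contDiff_const_smul _)
  have hηc : HasCompactSupport fun x : E2 => b (R⁻¹ • x) :=
    b.hasCompactSupport.comp_smul (inv_ne_zero hR.ne')
  have hgrad (x : E2) : gradient (fun x : E2 => b (R⁻¹ • x)) x = R⁻¹ • gradient b (R⁻¹ • x) := by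
    simp only [gradient]
    rw [fderiv_comp_smul]
    simp
  refine ⟨_, hη, hηc, fun x hx => ?_, ?_, ?_⟩
  · apply b.one_of_mem_closedBall
    have : ‖x‖ < R := by simpa using hx
    simp only [mem_closedBall, dist_zero_right, norm_smul, norm_inv, Real.norm_eq_abs,
      abs_of_pos hR]
    change R⁻¹ * ‖x‖ ≤ 1
    rw [inv_mul_le_iff₀ hR]
    linarith
  · refine Continuous.integrable_of_hasCompactSupport
      ((contDiff_gradient (n := 0) hη).continuous.norm.pow 2) ?_
    refine (hηc.fderiv ℝ).mono' fun x hx => subset_tsupport _ fun h => hx ?_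
    simp [gradient, h]
  · simp_rw [hgrad, norm_smul, mul_pow]
    rw [integral_const_mul,
      Measure.integral_comp_inv_smul volume (fun y : E2 => ‖gradient b y‖ ^ 2) R]
    have : (R : ℝ) ≠ 0 := hR.ne'
    simp [abs_of_pos hR]
    field_simp
    rfl

theorem statement4 (f u : E2 → ℝ)
    (hf : ContDiff ℝ 2 f)
    (hpos : ∀ p q : E2, q ≠ 0 → 0 < Hess f p q)
    (lam : ℝ) (hlam : 0 < lam)
    (hgrow : ∀ p q : E2, Hess f p q ≤ lam * (Real.log (2 + ‖p‖) / (1 + ‖p‖)) * ‖q‖ ^ 2)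
    (hu : ContDiff ℝ 2 u) (heq : solves f u)
    (m K : ℝ) (hm0 : 0 ≤ m) (hm1 : m < 1) (hK : 0 < K)
    (hbd : ∀ x : E2, |pd u 0 x| ≤ K * (|pd u 1 x| ^ m + 1)) :
    ∀ α : ℝ, -1/2 < α → 2 * m * (1 + α) - 1 < 0 →
      ∫⁻ x : E2, ENNReal.ofReal
        (Hess f (gradient u x) (gradient (pd u 0) x) * (1 + (pd u 0 x) ^ 2) ^ α) < ⊤ := by
  intro α hα hmα
  have hHess (p q : E2) : Hess f p q = fderiv ℝ (fderiv ℝ f) p q q := by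
    simp [Hess, iteratedFDeriv_two_apply]
  simp only [hHess] at hpos hgrow ⊢
  have hnn (p q : E2) : 0 ≤ fderiv ℝ (fderiv ℝ f) p q q := by
    rcases eq_or_ne q 0 with rfl | hq
    · simp
    · exact (hpos p q hq).le
  have hsymm (p v w : E2) : fderiv ℝ (fderiv ℝ f) p v w = fderiv ℝ (fderiv ℝ f) p w v :=
    (hf.contDiffAt.isSymmSndFDerivAt (by simp)).eq v w
  obtain ⟨C₁, hC₁, hweight⟩ := exists_log_div_mul_rpow_le hm0 hK hα hmα
  obtain ⟨C₂, hcut⟩ := exists_cutoff_dirichlet_bound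
  set g : E2 → ℝ := pd u 0 with hgdef
  have hgc : ContDiff ℝ 1 g := (hu.fderiv_right (m := 1) le_rfl).clm_apply contDiff_const
  set Q : E2 → ℝ := fun x =>
    fderiv ℝ (fderiv ℝ f) (gradient u x) (gradient g x) (gradient g x) * (1 + g x ^ 2) ^ α
    with hQ
  have hΓ (x : E2) : 0 < 1 + g x ^ 2 := by positivity
  have hQ0 (x : E2) : 0 ≤ Q x := mul_nonneg (hnn _ _) (Real.rpow_nonneg (hΓ x).le _)
  have hD2 : Continuous fun x => fderiv ℝ (fderiv ℝ f) (gradient u x) :=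
    ((hf.fderiv_right (m := 1) le_rfl).continuous_fderiv one_ne_zero).comp
      (contDiff_gradient (n := 1) hu).continuous
  have hgg : Continuous (gradient g) := (contDiff_gradient (n := 0) hgc).continuous
  have hΓα : ContDiff ℝ 1 fun x => (1 + g x ^ 2) ^ α :=
    (contDiff_const.add (hgc.pow 2)).rpow_const_of_ne fun x => (hΓ x).ne'
  have hQc : Continuous Q := ((hD2.clm_apply hgg).clm_apply hgg).mul hΓα.continuous
  set c := min 1 (1 + 2 * α) with hcdef
  have hc : 0 < c := lt_min one_pos (by linarith)
  have hcw (t : ℝ) : c ≤ 1 + 2 * α * t ^ 2 / (1 + t ^ 2) := by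
    have ht : 0 < 1 + t ^ 2 := by positivity
    have h1 : c ≤ 1 := min_le_left _ _
    have h2 : c ≤ 1 + 2 * α := min_le_right _ _
    rw [← sub_nonneg]
    have : 1 + 2 * α * t ^ 2 / (1 + t ^ 2) - c
        = ((1 - c) + (1 + 2 * α - c) * t ^ 2) / (1 + t ^ 2) := by
      field_simp
      ring
    rw [this]
    exact div_nonneg (add_nonneg (by linarith) (mul_nonneg (by linarith) (sq_nonneg t))) ht.le
  have hA (x w : E2) : g x ^ 2 * (1 + g x ^ 2) ^ α *
      fderiv ℝ (fderiv ℝ f) (gradient u x) w w ≤ lam * C₁ * ‖w‖ ^ 2 := by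
    have hle : |pd u 1 x| ≤ ‖gradient u x‖ := by
      rw [← gradient_apply_eq_pd]
      exact PiLp.norm_apply_le (gradient u x) 1
    have hw := hweight ‖gradient u x‖ |pd u 1 x| (g x) (abs_nonneg _) hle (hbd x)
    calc g x ^ 2 * (1 + g x ^ 2) ^ α * fderiv ℝ (fderiv ℝ f) (gradient u x) w w
        ≤ (1 + g x ^ 2) ^ (1 + α) *
          (lam * (Real.log (2 + ‖gradient u x‖) / (1 + ‖gradient u x‖)) * ‖w‖ ^ 2) := by
          refine mul_le_mul ?_ (hgrow _ _) (hnn _ _) (Real.rpow_nonneg (hΓ x).le _)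
          rw [Real.rpow_add (hΓ x), Real.rpow_one]
          exact mul_le_mul_of_nonneg_right (by linarith) (Real.rpow_nonneg (hΓ x).le _)
      _ = lam * (Real.log (2 + ‖gradient u x‖) / (1 + ‖gradient u x‖) *
          (1 + g x ^ 2) ^ (1 + α)) * ‖w‖ ^ 2 := by ring
      _ ≤ lam * C₁ * ‖w‖ ^ 2 := by gcongr
  set M := 2 / c * (2 / c * (lam * C₁) * C₂) with hM
  have hball (R : ℝ) (hR : 0 < R) :
      ∫⁻ x in ball (0 : E2) R, ENNReal.ofReal (Q x) ≤ ENNReal.ofReal M := by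
    obtain ⟨η, hη, hηc, hη1, hηi, hηC⟩ := hcut R hR
    set φ : E2 → ℝ := fun y => η y ^ 2 * (fun t : ℝ => t * (1 + t ^ 2) ^ α) (g y)
    have hφ : ContDiff ℝ 1 φ := (hη.pow 2).mul (hgc.mul hΓα)
    have hη2 : HasCompactSupport fun x => η x ^ 2 := hηc.comp_left (g := fun t => t ^ 2) (by simp)
    have hφc : HasCompactSupport φ := hη2.mul_right
    have hweak := integral_snd_fderiv_gradient_eq_zero hf hu heq hφ hφc 0
    have hpt (x : E2) : c / 2 * (η x ^ 2 * Q x) ≤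
        fderiv ℝ (fderiv ℝ f) (gradient u x) (gradient g x) (gradient φ x) +
          2 / c * (lam * C₁) * ‖gradient η x‖ ^ 2 := by
      rw [gradient_sq_mul_comp (hη.differentiable one_ne_zero x)
        (hgc.differentiable one_ne_zero x) (hasDerivAt_mul_one_add_sq_rpow α (g x))]
      refine (mul_le_young_of_symm _ (hsymm _) (hnn _) hc (Real.rpow_nonneg (hΓ x).le α)
        (hcw (g x)) (η x) (g x) (gradient g x) (gradient η x)).trans ?_
      have := mul_le_mul_of_nonneg_left (hA x (gradient η x)) (by positivity : 0 ≤ 2 / c)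
      linarith
    have hi1 : Integrable fun x => η x ^ 2 * Q x :=
      ((hη.continuous.pow 2).mul hQc).integrable_of_hasCompactSupport hη2.mul_right
    have hi2 : Integrable fun x =>
        fderiv ℝ (fderiv ℝ f) (gradient u x) (gradient g x) (gradient φ x) := by
      refine ((hD2.clm_apply hgg).clm_apply
        (contDiff_gradient (n := 0) hφ).continuous).integrable_of_hasCompactSupport ?_
      refine (hφc.fderiv ℝ).mono' fun x hx => subset_tsupport _ fun h => hx ?_
      simp [gradient, h]
    have hint := integral_mono (hi1.const_mul (c / 2))
      (hi2.add (hηi.const_mul (2 / c * (lam * C₁)))) hpt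
    simp only [Pi.add_apply] at hint
    rw [integral_add hi2 (hηi.const_mul _), integral_const_mul, integral_const_mul, hweak,
      zero_add] at hint
    have hbound : ∫ x, η x ^ 2 * Q x ≤ M := by
      have h1 := mul_le_mul_of_nonneg_left hηC (by positivity : 0 ≤ 2 / c * (lam * C₁))
      have h2 := mul_le_mul_of_nonneg_left (hint.trans h1) (by positivity : 0 ≤ 2 / c)
      refine le_trans (le_of_eq ?_) h2
      field_simp
    calc ∫⁻ x in ball (0 : E2) R, ENNReal.ofReal (Q x)
        = ∫⁻ x in ball (0 : E2) R, ENNReal.ofReal (η x ^ 2 * Q x) :=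
          setLIntegral_congr_fun measurableSet_ball fun x hx => by simp [hη1 x hx]
      _ ≤ ∫⁻ x, ENNReal.ofReal (η x ^ 2 * Q x) := setLIntegral_le_lintegral _ _
      _ = ENNReal.ofReal (∫ x, η x ^ 2 * Q x) :=
          (ofReal_integral_eq_lintegral_ofReal hi1
            (Filter.Eventually.of_forall fun x => mul_nonneg (sq_nonneg _) (hQ0 x))).symm
      _ ≤ ENNReal.ofReal M := ENNReal.ofReal_le_ofReal hbound
  have hlim := (aecover_ball (μ := (volume : Measure E2)) (x := 0)
    Filter.tendsto_id).lintegral_tendsto_of_countably_generated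
      hQc.measurable.ennreal_ofReal.aemeasurable
  refine (le_of_tendsto hlim ?_).trans_lt (ENNReal.ofReal_lt_top (r := M))
  filter_upwards [Filter.eventually_gt_atTop 0] with R hR using hball R hR
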